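/- Let f be a monotone, normalized, submodular function on a finite ground set V with |V| = n, and let X ⊆ V be nonempty with f(X) > 0 and f({j}) > 0 for every j ∈ X. Define α(X) = |X| / (1 + (|X| − 1)(1 − κ̂_f(X))). Let δ > 0 satisfy δ · n < f(X), and define w(j) = f({j}) + δ for j with f({j}) > 0 and w(j) = 0 otherwise. Then Σ_{j∈X} w(j) − f(X) > 0 and Σ_{j∈X} w(j) − (α(X) + 1) · f(X) < 0; that is, f(X) < w(X) < (α(X) + 1) · f(X). -/

import Mathlib

/-!
Write `k = |X|`, `S = ∑ j ∈ X, f {j}` and `G = ∑ j ∈ X, (f X - f (X \ {j}))`. The lower bound is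
subadditivity, `f X ≤ S`, made strict by the positive shift `δ`. For the upper bound, removing the
elements of `X \ {j}` from `X` one at a time loses at least their gains at `X`
(`sum_gain_le_sub_sdiff`), so `f {j} + ∑ i ∈ X \ {j}, (f X - f (X \ {i})) ≤ f X` for each `j ∈ X`.
Summing over `j` gives `S + (k - 1) G ≤ k f X`, which is `S ≤ α(X) f X` because
`1 - κ̂ = G / S`. The shift contributes `k δ ≤ n δ < f X`.
-/

open Finset

/-- By submodularity each element's gain is smallest at the full set `X`, so these gains telescope
to a lower bound on the loss from removing `D`. -/
lemma sum_gain_le_sub_sdiff {V : Type*} [DecidableEq V] (f : Finset V → ℝ)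
    (hsub : ∀ S T : Finset V, f S + f T ≥ f (S ∪ T) + f (S ∩ T)) (X D : Finset V) :
    ∑ i ∈ D, (f X - f (X \ {i})) ≤ f X - f (X \ D) := by
  induction D using Finset.induction_on with
  | empty => simp
  | insert i D hi ih =>
    rw [Finset.sum_insert hi]
    have h := hsub (X \ D) (X \ {i})
    have hunion : X \ D ∪ X \ {i} = X := by
      ext a
      simp only [mem_union, mem_sdiff, mem_singleton]
      grind
    have hinter : X \ D ∩ (X \ {i}) = X \ insert i D := by
      ext a
      simp only [mem_inter, mem_sdiff, mem_singleton, mem_insert]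
      tauto
    rw [hunion, hinter] at h
    linarith

lemma le_sum_singleton {V : Type*} [DecidableEq V] (f : Finset V → ℝ)
    (hsub : ∀ S T : Finset V, f S + f T ≥ f (S ∪ T) + f (S ∩ T)) (hnorm : f ∅ = 0)
    (X : Finset V) : f X ≤ ∑ j ∈ X, f {j} := by
  induction X using Finset.induction_on with
  | empty => simp [hnorm]
  | insert i D hi ih =>
    rw [Finset.sum_insert hi]
    have h := hsub {i} D
    rw [Finset.singleton_inter_of_notMem hi, hnorm, ← Finset.insert_eq] at h
    linarith

/-- The estimate `S + (k - 1) G ≤ k f X`, the division-free form of `S ≤ α(X) f X`. -/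
lemma sum_singleton_add_gain_le {V : Type*} [DecidableEq V] (f : Finset V → ℝ)
    (hsub : ∀ S T : Finset V, f S + f T ≥ f (S ∪ T) + f (S ∩ T)) (X : Finset V) :
    ∑ j ∈ X, f {j} + ((X.card : ℝ) - 1) * ∑ j ∈ X, (f X - f (X \ {j}))
      ≤ (X.card : ℝ) * f X := by
  have hj : ∀ j ∈ X, f {j} + (∑ i ∈ X, (f X - f (X \ {i})) - (f X - f (X \ {j}))) ≤ f X := by
    intro j hjX
    have h := sum_gain_le_sub_sdiff f hsub X (X.erase j)
    have hsd : X \ X.erase j = {j} := by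
      ext a
      simp only [mem_sdiff, mem_erase, mem_singleton]
      grind
    rw [hsd] at h
    have he := Finset.add_sum_erase X (fun i => f X - f (X \ {i})) hjX
    linarith
  have hs := Finset.sum_le_sum hj
  rw [Finset.sum_add_distrib, Finset.sum_sub_distrib] at hs
  simp only [Finset.sum_const, nsmul_eq_mul] at hs
  linarith

/-- Linear separability of the PMAC-learning samples: with
`α(X) = |X| / (1 + (|X|-1)(1-κ̂_f(X)))`, `δ·n < f(X)`, and weights
`w(j) = f {j} + δ` when `f {j} > 0` (else `0`), we have
`f(X) < ∑_{j∈X} w(j) < (α(X)+1) f(X)`. -/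
theorem pmac_samples_separable
    {V : Type*} [Fintype V] [DecidableEq V]
    (n : ℕ) (hn : Fintype.card V = n)
    (f : Finset V → ℝ)
    (hsub : ∀ S T : Finset V, f S + f T ≥ f (S ∪ T) + f (S ∩ T))
    (hmono : ∀ S T : Finset V, S ⊆ T → f S ≤ f T)
    (hnorm : f ∅ = 0)
    (X : Finset V) (hX : X.Nonempty) (hfX : 0 < f X)
    (hpos : ∀ j ∈ X, 0 < f {j})
    (κhat αX : ℝ)
    (hκhat : κhat = 1 - (∑ j ∈ X, (f X - f (X \ {j}))) / (∑ j ∈ X, f {j}))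
    (hαX : αX = (X.card : ℝ) / (1 + ((X.card : ℝ) - 1) * (1 - κhat)))
    (δ : ℝ) (hδ : 0 < δ) (hδn : δ * (n : ℝ) < f X)
    (w : V → ℝ)
    (hw : ∀ j : V, w j = if 0 < f {j} then f {j} + δ else 0) :
    f X < ∑ j ∈ X, w j ∧ (∑ j ∈ X, w j) < (αX + 1) * f X := by
  have hsum : ∑ j ∈ X, w j = ∑ j ∈ X, f {j} + (X.card : ℝ) * δ := by
    rw [Finset.sum_congr rfl (fun j hj => by rw [hw j, if_pos (hpos j hj)]),
      Finset.sum_add_distrib, Finset.sum_const, nsmul_eq_mul]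
  have hk : (1 : ℝ) ≤ X.card := by exact_mod_cast hX.card_pos
  have hkn : (X.card : ℝ) ≤ n := by exact_mod_cast hn ▸ X.card_le_univ
  have hlow := le_sum_singleton f hsub hnorm X
  have hup := sum_singleton_add_gain_le f hsub X
  have hG : 0 ≤ ∑ j ∈ X, (f X - f (X \ {j})) :=
    Finset.sum_nonneg fun j _ => sub_nonneg.2 (hmono _ _ Finset.sdiff_subset)
  rw [hsum]
  generalize ∑ j ∈ X, (f X - f (X \ {j})) = G at *
  generalize ∑ j ∈ X, f {j} = S at *
  have hS : 0 < S := hfX.trans_le hlow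
  have hα : S ≤ αX * f X := by
    have hκ : 1 - κhat = G / S := by rw [hκhat]; ring
    have hden : 0 < 1 + ((X.card : ℝ) - 1) * (G / S) := by
      have : 0 ≤ ((X.card : ℝ) - 1) * (G / S) :=
        mul_nonneg (by linarith) (div_nonneg hG hS.le)
      linarith
    rw [hαX, hκ, div_mul_eq_mul_div, le_div_iff₀ hden]
    calc S * (1 + ((X.card : ℝ) - 1) * (G / S)) = S + ((X.card : ℝ) - 1) * G := by
          field_simp
      _ ≤ (X.card : ℝ) * f X := hup
  constructor
  · have : 0 < (X.card : ℝ) * δ := by positivity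
    linarith
  · have : (X.card : ℝ) * δ ≤ n * δ := by gcongr
    linarith
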